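/- In the finite fully-branched C^{1+α} IFS setting with its dimension-δ Gibbs measure μ, assume (MNL) holds. Let t ∈ C^δ(F,ℝ) and set A := ‖t‖_{C^δ} + sup over all finite words a and all x₀ ∈ F of the C^δ-seminorm of x ↦ X_a(x,x₀) (which is finite). Then there exist γ, ρ ∈ (0,1) and C₀ ≥ 1, depending only on A and the IFS, such that for all sufficiently small σ > 0, all x₀, y₀, z₀ ∈ F, and all n ≥ 1: Σ_{a∈𝒜ⁿ} Σ_{c∈𝒜ⁿ} w_a(x₀) w_c(y₀) · 1_{[t(x_c)−σ, t(x_c)+σ]}( X_a(x_c, z₀) ) ≤ C₀(σ^γ + ρⁿ), where x_c ∈ I_c is a fixed reference point. -/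

import Mathlib

open MeasureTheory
open scoped ENNReal

noncomputable section

/-- The geometric part of a finite, fully-branched `C^{1+α}` iterated function system:
finitely many `C¹` contractions `g a` of a compact interval `J = [lo, hi]` with
`0 < κm ≤ |g_a'| ≤ κp < 1` and pairwise disjoint images. -/
structure FiniteIFS where
  A : Type
  finA : Finite A
  neA : Nonempty A
  lo : ℝ
  hi : ℝ
  hlohi : lo < hi
  g : A → ℝ → ℝ
  gd : A → ℝ → ℝ
  hderiv : ∀ a, ∀ x ∈ Set.Icc lo hi, HasDerivAt (g a) (gd a x) x
  hmaps : ∀ a, Set.MapsTo (g a) (Set.Icc lo hi) (Set.Icc lo hi)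
  κm : ℝ
  κp : ℝ
  hκm : 0 < κm
  hκp : κp < 1
  hcontr : ∀ a, ∀ x ∈ Set.Icc lo hi, κm ≤ |gd a x| ∧ |gd a x| ≤ κp
  hdisj : ∀ a b : A, a ≠ b → Disjoint (g a '' Set.Icc lo hi) (g b '' Set.Icc lo hi)

namespace FiniteIFS

variable (S : FiniteIFS)

/-- The ambient compact interval `J`. -/
def J : Set ℝ := Set.Icc S.lo S.hi

/-- The composition `g_{a₁} ∘ ⋯ ∘ g_{a_n}` along a word. -/
def gW : List S.A → ℝ → ℝ
  | [], x => x
  | a :: l, x => S.g a (gW l x)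

/-- The chain-rule derivative of `gW` along a word. -/
def gD : List S.A → ℝ → ℝ
  | [], _ => 1
  | a :: l, x => S.gd a (S.gW l x) * gD l x

/-- The cylinder interval `I_a = g_a(J)`. -/
def cyl (l : List S.A) : Set ℝ := S.gW l '' S.J

/-- The attractor `F = ⋂ₙ ⋃_{a∈𝒜ⁿ} I_a`. -/
def attract : Set ℝ := ⋂ n : ℕ, ⋃ a : Fin (n + 1) → S.A, S.cyl (List.ofFn a)

/-- The distortion fluctuation `X_a(x,y) = log|g_a'(x)| − log|g_a'(y)|`. -/
def X (l : List S.A) (x y : ℝ) : ℝ := Real.log |S.gD l x| - Real.log |S.gD l y|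

/-- The finite-scale temporal distance. -/
def Delta (a b : List S.A) (x y : ℝ) : ℝ := S.X a x y - S.X b x y

end FiniteIFS

/-- A finite fully-branched `C^{1+α}` IFS together with its dimension-`δ` Gibbs
(equilibrium) measure `μ` for the potential `δ·log|g'|`, where `δ = dim_H F`. -/
structure FiniteGibbsIFS extends FiniteIFS where
  refPt : List A → ℝ
  refPt_mem : ∀ l, refPt l ∈ toFiniteIFS.cyl l
  δ : ℝ
  hδ : δ ∈ Set.Ioo (0:ℝ) 1
  hdim : ENNReal.ofReal δ = dimH toFiniteIFS.attract
  Cstar : ℝ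
  hCstar : 1 ≤ Cstar
  hXHolder : ∀ l : List A, ∀ x ∈ Set.Icc lo hi, ∀ y ∈ Set.Icc lo hi,
    |toFiniteIFS.X l x y| ≤ Cstar * |x - y| ^ δ
  hmult : ∀ l l' : List A,
    Metric.diam (toFiniteIFS.cyl (l ++ l')) ≤
        Cstar * (Metric.diam (toFiniteIFS.cyl l) * Metric.diam (toFiniteIFS.cyl l')) ∧
      Metric.diam (toFiniteIFS.cyl l) * Metric.diam (toFiniteIFS.cyl l') ≤
        Cstar * Metric.diam (toFiniteIFS.cyl (l ++ l'))
  μ : Measure ℝ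
  hprob : IsProbabilityMeasure μ
  hsupp : μ (toFiniteIFS.attract)ᶜ = 0
  hfrostman : ∀ l : List A,
    (μ (toFiniteIFS.cyl l)).toReal ≤ Cstar * Metric.diam (toFiniteIFS.cyl l) ^ δ ∧
      Metric.diam (toFiniteIFS.cyl l) ^ δ ≤ Cstar * (μ (toFiniteIFS.cyl l)).toReal
  w : List A → ℝ → ℝ
  hw : ∀ l : List A, ∀ x ∈ Set.Icc lo hi,
    (μ (toFiniteIFS.cyl l)).toReal ≤ Cstar * w l x ∧
      w l x ≤ Cstar * (μ (toFiniteIFS.cyl l)).toReal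
  conformal : ∀ n : ℕ, ∀ f : ℝ → ℝ, Continuous f →
    ∫ x, f x ∂μ = ∑' a : Fin n → A,
      ∫ x, w (List.ofFn a) x * f (toFiniteIFS.gW (List.ofFn a) x) ∂μ

namespace FiniteGibbsIFS

variable (S : FiniteGibbsIFS)

abbrev J : Set ℝ := S.toFiniteIFS.J
abbrev gW : List S.A → ℝ → ℝ := S.toFiniteIFS.gW
abbrev gD : List S.A → ℝ → ℝ := S.toFiniteIFS.gD
abbrev cyl : List S.A → Set ℝ := S.toFiniteIFS.cyl
abbrev attract : Set ℝ := S.toFiniteIFS.attract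
abbrev X : List S.A → ℝ → ℝ → ℝ := S.toFiniteIFS.X
abbrev Delta : List S.A → List S.A → ℝ → ℝ → ℝ := S.toFiniteIFS.Delta

/-- The Measure Non-Linearity condition (MNL): for every `N ≥ 1` there are words
`a, b ∈ 𝒜^N` such that the pushforward of `μ` under `X_a(·,x₀) - X_b(·,x₀)` is
absolutely non-concentrated: it gives mass at most `C_MNL |I|` to every interval `I`,
uniformly in `x₀ ∈ F`. -/
def MNL (CM : ℝ) : Prop :=
  ∀ N : ℕ, 1 ≤ N → ∃ a b : Fin N → S.A,
    ∀ x₀ ∈ S.attract, ∀ u v : ℝ, u ≤ v →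
      S.μ {x : ℝ | x ∈ S.attract ∧
          S.X (List.ofFn a) x x₀ - S.X (List.ofFn b) x x₀ ∈ Set.Icc u v}
        ≤ ENNReal.ofReal (CM * (v - u))

end FiniteGibbsIFS

end

/-! By (MNL) for words `α`, `β` of some fixed length `N`, together with contraction, the cylinders
that meet the sublevel set `|X_{aα} − X_{bβ}| ≤ s` lose half of their mass every `N` generations
down to scale `s`, uniformly in the prefixes `a`, `b`. If `X_l` and `X_{l'}` are both within `σ` of
`t` at a reference point, then `|X_l − X_{l'}| ≤ 2σ` there and `t` has disappeared; hence, by the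
second moment, the smaller of the masses of near words ending in `αu` and in `βu` is tiny on
average over the reference points. Discarding that smaller branch at every node sheds a fixed
proportion of the total mass in every `N` generations, and doing so about `log(1/σ) ∧ n` times
gives the power of `σ` and the exponential in `n`. -/

lemma sq_sum_mul_min_le_sum_mul_mul {ι : Type*} {s : Finset ι} {w f g : ι → ℝ}
    (hw : ∀ i ∈ s, 0 ≤ w i) (hw1 : ∑ i ∈ s, w i = 1) (hf : ∀ i ∈ s, 0 ≤ f i)
    (hg : ∀ i ∈ s, 0 ≤ g i) :
    (∑ i ∈ s, w i * min (f i) (g i)) ^ 2 ≤ ∑ i ∈ s, w i * (f i * g i) := by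
  have hmin : ∀ i ∈ s, 0 ≤ min (f i) (g i) := fun i hi => le_min (hf i hi) (hg i hi)
  refine (Real.pow_arith_mean_le_arith_mean_pow s w _ hw hw1 hmin 2).trans ?_
  refine Finset.sum_le_sum fun i hi => mul_le_mul_of_nonneg_left ?_ (hw i hi)
  rw [sq]
  exact mul_le_mul (min_le_left _ _) (min_le_right _ _) (hmin i hi) (hf i hi)

lemma geom_sum_le_pow {B : ℝ} (hB : 2 ≤ B) (k : ℕ) : ∑ j ∈ Finset.range k, B ^ j ≤ B ^ k := by
  induction k with
  | zero => simp
  | succ k ih =>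
    calc ∑ j ∈ Finset.range (k + 1), B ^ j = ∑ j ∈ Finset.range k, B ^ j + B ^ k :=
          Finset.sum_range_succ _ _
      _ ≤ 2 * B ^ k := by linarith
      _ ≤ B ^ (k + 1) := by
          rw [pow_succ']
          gcongr

lemma exists_pow_le_mul_rpow {c θ ρ : ℝ} (hc : 0 < c) (hθ : θ ∈ Set.Ioo (0 : ℝ) 1)
    (hρ : ρ ∈ Set.Ioo (0 : ℝ) 1) :
    ∃ γ ∈ Set.Ioo (0 : ℝ) 1, ∃ K > 0, ∀ σ > 0, ∃ i : ℕ, (i = 0 ∨ σ ≤ c * θ ^ i) ∧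
      ρ ^ i ≤ K * σ ^ γ := by
  obtain ⟨⟨hθ0, hθ1⟩, hρ0, hρ1⟩ := And.intro hθ hρ
  have hθρ0 : 0 < θ * ρ := mul_pos hθ0 hρ0
  have hθρ : θ * ρ < ρ := mul_lt_of_lt_one_left hρ0 hθ1
  have hθρ1 : θ * ρ < 1 := hθρ.trans hρ1
  set γ := Real.logb (θ * ρ) ρ with hγ
  have hγ0 : 0 < γ := Real.logb_pos_of_base_lt_one hθρ0 hθρ1 hρ0 hρ1
  have hγ1 : γ < 1 := by
    rwa [hγ, Real.logb_lt_iff_lt_rpow_of_base_lt_one hθρ0 hθρ1 hρ0, Real.rpow_one]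
  have hρθ : ρ ≤ θ ^ γ := by
    calc ρ = (θ * ρ) ^ γ := (Real.rpow_logb hθρ0 hθρ1.ne hρ0).symm
      _ ≤ θ ^ γ := Real.rpow_le_rpow hθρ0.le (mul_le_of_le_one_right hθ0.le hρ1.le) hγ0.le
  refine ⟨γ, ⟨hγ0, hγ1⟩, (ρ * c ^ γ)⁻¹, by positivity, fun σ hσ => ?_⟩
  have hσc : (ρ * c ^ γ)⁻¹ * σ ^ γ = ρ⁻¹ * (σ / c) ^ γ := by
    rw [Real.div_rpow hσ.le hc.le, mul_inv, div_eq_mul_inv]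
    ring
  rw [hσc]
  rcases le_or_gt σ c with hle | hlt
  · obtain ⟨i, hi, hi'⟩ :=
      exists_nat_pow_near_of_lt_one (div_pos hσ hc) ((div_le_one hc).2 hle) hθ0 hθ1
    refine ⟨i, Or.inr ((div_le_iff₀' hc).1 hi'), ?_⟩
    rw [le_inv_mul_iff₀ hρ0, ← pow_succ']
    calc ρ ^ (i + 1) ≤ (θ ^ γ) ^ (i + 1) := by gcongr
      _ = (θ ^ (i + 1)) ^ γ := Real.rpow_pow_comm hθ0.le _ _
      _ ≤ (σ / c) ^ γ := by gcongr
  · refine ⟨0, Or.inl rfl, ?_⟩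
    rw [pow_zero]
    exact one_le_mul_of_one_le_of_one_le ((one_le_inv₀ hρ0).2 hρ1.le)
      (Real.one_le_rpow ((one_le_div hc).2 hlt.le) hγ0.le)

lemma exists_pow_div_le_mul_pow {N : ℕ} (hN : 1 ≤ N) {ρ : ℝ} (hρ : ρ ∈ Set.Ioo (0 : ℝ) 1) :
    ∃ ρ' ∈ Set.Ioo (0 : ℝ) 1, ∀ n : ℕ, ρ ^ (n / N) ≤ ρ⁻¹ * ρ' ^ n := by
  have hNpos : (0 : ℝ) < (N : ℝ)⁻¹ := by positivity
  have hρ'0 : 0 < ρ ^ (N : ℝ)⁻¹ := Real.rpow_pos_of_pos hρ.1 _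
  have hρ'1 : ρ ^ (N : ℝ)⁻¹ < 1 := Real.rpow_lt_one hρ.1.le hρ.2 hNpos
  refine ⟨_, ⟨hρ'0, hρ'1⟩, fun n => ?_⟩
  rw [le_inv_mul_iff₀ hρ.1, ← pow_succ']
  calc ρ ^ (n / N + 1) = (ρ ^ (N : ℝ)⁻¹) ^ (N * (n / N + 1)) := by
        rw [pow_mul, Real.rpow_inv_natCast_pow hρ.1.le (by omega)]
    _ ≤ (ρ ^ (N : ℝ)⁻¹) ^ n :=
        pow_le_pow_of_le_one hρ'0.le hρ'1.le (Nat.lt_mul_div_succ n hN).le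

lemma exists_le_mul_rpow_add_pow {N : ℕ} (hN : 1 ≤ N) {c θ ρ C : ℝ} (hc : 0 < c)
    (hθ : θ ∈ Set.Ioo (0 : ℝ) 1) (hρ : ρ ∈ Set.Ioo (0 : ℝ) 1) (hC : 0 ≤ C) :
    ∃ γ ∈ Set.Ioo (0 : ℝ) 1, ∃ ρ' ∈ Set.Ioo (0 : ℝ) 1, ∃ C' : ℝ, ∀ Q σ : ℝ, ∀ n : ℕ, 0 < σ →
      Q ≤ C → (∀ k : ℕ, k * N ≤ n → σ ≤ c * θ ^ k → Q ≤ C * ρ ^ k) →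
        Q ≤ C' * (σ ^ γ + ρ' ^ n) := by
  obtain ⟨γ, hγ, K, hK, hKσ⟩ := exists_pow_le_mul_rpow hc hθ hρ
  obtain ⟨ρ', hρ', hρn⟩ := exists_pow_div_le_mul_pow hN hρ
  refine ⟨γ, hγ, ρ', hρ', C * (K + ρ⁻¹), fun Q σ n hσ hQC hQ => ?_⟩
  obtain ⟨i, hi, hiσ⟩ := hKσ σ hσ
  have hρ0 := hρ.1
  have hρ'0 := hρ'.1
  -- The hypothesis is used at the largest step allowed by both `σ` and `n`.
  have hQmin : Q ≤ C * ρ ^ min i (n / N) := by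
    rcases hi with rfl | hi
    · simpa using hQC
    · refine hQ _ ((Nat.mul_le_mul_right N (min_le_right _ _)).trans (Nat.div_mul_le_self n N))
        (hi.trans ?_)
      exact mul_le_mul_of_nonneg_left
        (pow_le_pow_of_le_one hθ.1.le hθ.2.le (min_le_left _ _)) hc.le
  have hmin : ρ ^ min i (n / N) ≤ ρ ^ i + ρ ^ (n / N) := by
    rcases min_choice i (n / N) with h | h <;> rw [h]
    · exact le_add_of_nonneg_right (by positivity)
    · exact le_add_of_nonneg_left (by positivity)
  calc Q ≤ C * (ρ ^ i + ρ ^ (n / N)) := hQmin.trans (by gcongr)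
    _ ≤ C * (K * σ ^ γ + ρ⁻¹ * ρ' ^ n) := by
        gcongr
        exact hρn n
    _ ≤ C * ((K + ρ⁻¹) * σ ^ γ + (K + ρ⁻¹) * ρ' ^ n) := by
        gcongr
        · exact le_add_of_nonneg_right (by positivity)
        · exact le_add_of_nonneg_left hK.le
    _ = C * (K + ρ⁻¹) * (σ ^ γ + ρ' ^ n) := by ring

section Words

variable (A : Type*) [Finite A]

/-- The finite set of words of length `n` over the alphabet `A`. -/
noncomputable def words (n : ℕ) : Finset (List A) := (List.finite_length_eq A n).toFinset

variable {A}

@[simp]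
lemma mem_words {n : ℕ} {l : List A} : l ∈ words A n ↔ l.length = n := by
  simp [words]

lemma words_zero : words A 0 = {[]} := by
  ext l
  simp

lemma sum_words_eq_sum_ofFn {A : Type*} [Fintype A] {M : Type*} [AddCommMonoid M] (n : ℕ)
    (f : List A → M) : ∑ l ∈ words A n, f l = ∑ a : Fin n → A, f (List.ofFn a) := by
  refine (Finset.sum_bij (fun a _ => List.ofFn a) (by simp) (fun a _ b _ h => ?_)
    (fun l hl => ?_) fun _ _ => rfl).symm
  · exact List.ofFn_injective h
  · obtain rfl := mem_words.1 hl
    exact ⟨l.get, Finset.mem_univ _, List.ofFn_get l⟩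

lemma sum_words_add {M : Type*} [AddCommMonoid M] (m n : ℕ) (f : List A → M) :
    ∑ l ∈ words A (m + n), f l = ∑ l ∈ words A m, ∑ l' ∈ words A n, f (l ++ l') := by
  rw [← Finset.sum_product']
  refine Finset.sum_nbij' (fun l => (l.take m, l.drop m)) (fun p => p.1 ++ p.2)
    ?_ ?_ (by simp) ?_ (by simp)
  · intro l hl
    simp [mem_words.1 hl]
  · rintro ⟨l, l'⟩ h
    simp_all
  · rintro ⟨l, l'⟩ h
    obtain ⟨rfl, -⟩ : l.length = m ∧ l'.length = n := by simpa using h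
    simp

/-- The sum of `h` over the words of length `n` that end in `u`. When `u` is longer than `n` the
truncated subtraction makes this `h u`. -/
noncomputable def suffixSum (n : ℕ) (h : List A → ℝ) (u : List A) : ℝ :=
  ∑ a ∈ words A (n - u.length), h (a ++ u)

lemma suffixSum_nil (n : ℕ) (h : List A → ℝ) : suffixSum n h [] = ∑ a ∈ words A n, h a := by
  simp [suffixSum]

lemma suffixSum_nonneg {h : List A → ℝ} (hh : ∀ l, 0 ≤ h l) (n : ℕ) (u : List A) :
    0 ≤ suffixSum n h u :=
  Finset.sum_nonneg fun _ _ => hh _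

lemma suffixSum_mono {h m : List A → ℝ} (hm : ∀ l, h l ≤ m l) (n : ℕ) (u : List A) :
    suffixSum n h u ≤ suffixSum n m u :=
  Finset.sum_le_sum fun _ _ => hm _

lemma suffixSum_eq_sum_suffixSum_append {n N : ℕ} {u : List A} (hu : u.length + N ≤ n)
    (h : List A → ℝ) : suffixSum n h u = ∑ ζ ∈ words A N, suffixSum n h (ζ ++ u) := by
  obtain ⟨p, rfl⟩ := Nat.exists_eq_add_of_le hu
  have hp : u.length + N + p - u.length = p + N := by omega
  rw [suffixSum, hp, sum_words_add, Finset.sum_comm]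
  refine Finset.sum_congr rfl fun ζ hζ => ?_
  have hp' : u.length + N + p - (ζ ++ u).length = p := by
    rw [List.length_append, mem_words.1 hζ]
    omega
  simp only [suffixSum, hp', List.append_assoc]

lemma sum_range_succ_sum_words_mul {M : Type*} [AddCommMonoid M] (N k : ℕ) (P : List A → M)
    (u : List A) :
    ∑ j ∈ Finset.range (k + 1), ∑ v ∈ words A (j * N), P (v ++ u) =
      P u + ∑ ζ ∈ words A N, ∑ j ∈ Finset.range k, ∑ v ∈ words A (j * N), P (v ++ (ζ ++ u)) := by
  rw [Finset.sum_range_succ', add_comm, zero_mul, words_zero, Finset.sum_singleton,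
    List.nil_append, Finset.sum_comm]
  congr 1
  refine Finset.sum_congr rfl fun j _ => ?_
  rw [add_mul, one_mul, sum_words_add, Finset.sum_comm]
  simp only [List.append_assoc]

lemma exists_suffixSum_le_min_add_sum {n N : ℕ} {h m : List A → ℝ} {q : ℝ} {α β u : List A}
    (hα : α ∈ words A N) (hβ : β ∈ words A N) (hu : u.length + N ≤ n)
    (hqα : suffixSum n m u - suffixSum n m (α ++ u) ≤ q * suffixSum n m u)
    (hqβ : suffixSum n m u - suffixSum n m (β ++ u) ≤ q * suffixSum n m u) :
    ∃ T ⊆ words A N, ∑ ζ ∈ T, suffixSum n m (ζ ++ u) ≤ q * suffixSum n m u ∧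
      suffixSum n h u ≤ min (suffixSum n h (α ++ u)) (suffixSum n h (β ++ u)) +
        ∑ ζ ∈ T, suffixSum n h (ζ ++ u) := by
  classical
  have split (f : List A → ℝ) {ξ : List A} (hξ : ξ ∈ words A N) : suffixSum n f u =
      suffixSum n f (ξ ++ u) + ∑ ζ ∈ (words A N).erase ξ, suffixSum n f (ζ ++ u) := by
    rw [suffixSum_eq_sum_suffixSum_append hu]
    exact (Finset.add_sum_erase _ (fun ζ => suffixSum n f (ζ ++ u)) hξ).symm
  rcases le_total (suffixSum n h (α ++ u)) (suffixSum n h (β ++ u)) with hle | hle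
  · refine ⟨(words A N).erase α, Finset.erase_subset _ _, ?_, ?_⟩
    · linarith [split m hα]
    · rw [min_eq_left hle, ← split h hα]
  · refine ⟨(words A N).erase β, Finset.erase_subset _ _, ?_, ?_⟩
    · linarith [split m hβ]
    · rw [min_eq_right hle, ← split h hβ]

/-- At every node the smaller of the two branches through `α` and `β` is paid for by the minimum,
so that the mass still to be accounted for shrinks by the factor `q` in each step. -/
lemma suffixSum_le_pow_mul_add_sum_min {n N : ℕ} {h m : List A → ℝ} (h0 : ∀ l, 0 ≤ h l)
    (hm : ∀ l, h l ≤ m l) {q : ℝ} (hq : 0 ≤ q) {α β : List A} (hα : α ∈ words A N)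
    (hβ : β ∈ words A N)
    (hqα : ∀ u, suffixSum n m u - suffixSum n m (α ++ u) ≤ q * suffixSum n m u)
    (hqβ : ∀ u, suffixSum n m u - suffixSum n m (β ++ u) ≤ q * suffixSum n m u)
    (k : ℕ) (u : List A) (hu : u.length + k * N ≤ n) :
    suffixSum n h u ≤ q ^ k * suffixSum n m u +
      ∑ j ∈ Finset.range k, ∑ v ∈ words A (j * N),
        min (suffixSum n h (α ++ (v ++ u))) (suffixSum n h (β ++ (v ++ u))) := by
  set P : List A → ℝ := fun v => min (suffixSum n h (α ++ v)) (suffixSum n h (β ++ v))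
  have hP0 (v : List A) : 0 ≤ P v := le_min (suffixSum_nonneg h0 _ _) (suffixSum_nonneg h0 _ _)
  induction k generalizing u with
  | zero => simpa using suffixSum_mono hm n u
  | succ k ih =>
    have hkN : u.length + N + k * N ≤ n := by linarith
    obtain ⟨T, hTN, hTm, hTh⟩ := exists_suffixSum_le_min_add_sum (h := h) hα hβ
      (le_of_add_le_left hkN) (hqα u) (hqβ u)
    have ihT : ∀ ζ ∈ T, suffixSum n h (ζ ++ u) ≤ q ^ k * suffixSum n m (ζ ++ u) +
        ∑ j ∈ Finset.range k, ∑ v ∈ words A (j * N), P (v ++ (ζ ++ u)) := fun ζ hζ => by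
      refine ih (ζ ++ u) ?_
      rw [List.length_append, mem_words.1 (hTN hζ)]
      omega
    calc suffixSum n h u
        ≤ P u + ∑ ζ ∈ T, suffixSum n h (ζ ++ u) := hTh
      _ ≤ P u + ∑ ζ ∈ T, (q ^ k * suffixSum n m (ζ ++ u) +
            ∑ j ∈ Finset.range k, ∑ v ∈ words A (j * N), P (v ++ (ζ ++ u))) := by
          gcongr with ζ hζ
          exact ihT ζ hζ
      _ = q ^ k * ∑ ζ ∈ T, suffixSum n m (ζ ++ u) + (P u +
            ∑ ζ ∈ T, ∑ j ∈ Finset.range k, ∑ v ∈ words A (j * N), P (v ++ (ζ ++ u))) := by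
          rw [Finset.sum_add_distrib, Finset.mul_sum]
          ring
      _ ≤ q ^ k * (q * suffixSum n m u) + (P u + ∑ ζ ∈ words A N,
            ∑ j ∈ Finset.range k, ∑ v ∈ words A (j * N), P (v ++ (ζ ++ u))) := by
          gcongr
          exact fun _ _ _ => Finset.sum_nonneg fun _ _ => Finset.sum_nonneg fun _ _ => hP0 _
      _ = q ^ (k + 1) * suffixSum n m u +
            ∑ j ∈ Finset.range (k + 1), ∑ v ∈ words A (j * N), P (v ++ u) := by
          rw [sum_range_succ_sum_words_mul, pow_succ, mul_assoc]

end Words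

namespace FiniteIFS

variable (S : FiniteIFS)

instance : Finite S.A := S.finA

lemma lo_mem_J : S.lo ∈ S.J := Set.left_mem_Icc.2 S.hlohi.le

lemma hi_mem_J : S.hi ∈ S.J := Set.right_mem_Icc.2 S.hlohi.le

lemma κm_le_κp : S.κm ≤ S.κp := by
  obtain ⟨a⟩ := S.neA
  exact (S.hcontr a S.lo S.lo_mem_J).1.trans (S.hcontr a S.lo S.lo_mem_J).2

lemma κp_nonneg : 0 ≤ S.κp := S.hκm.le.trans S.κm_le_κp

lemma gW_append (l l' : List S.A) (x : ℝ) : S.gW (l ++ l') x = S.gW l (S.gW l' x) := by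
  induction l with
  | nil => rfl
  | cons a l ih => simp [gW, ih]

lemma gD_append (l l' : List S.A) (x : ℝ) :
    S.gD (l ++ l') x = S.gD l (S.gW l' x) * S.gD l' x := by
  induction l with
  | nil => simp [gD]
  | cons a l ih => simp [gD, ih, gW_append, mul_assoc]

variable {S}

lemma gW_mem_J (l : List S.A) {x : ℝ} (hx : x ∈ S.J) : S.gW l x ∈ S.J := by
  induction l with
  | nil => exact hx
  | cons a l ih => exact S.hmaps a ih

lemma gD_ne_zero (l : List S.A) {x : ℝ} (hx : x ∈ S.J) : S.gD l x ≠ 0 := by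
  induction l with
  | nil => exact one_ne_zero
  | cons a l ih =>
    exact mul_ne_zero (abs_pos.1 (S.hκm.trans_le (S.hcontr a _ (gW_mem_J l hx)).1)) ih

lemma log_abs_gD_append (l l' : List S.A) {x : ℝ} (hx : x ∈ S.J) :
    Real.log |S.gD (l ++ l') x| = Real.log |S.gD l (S.gW l' x)| + Real.log |S.gD l' x| := by
  rw [gD_append, abs_mul, Real.log_mul (abs_ne_zero.2 (gD_ne_zero l (gW_mem_J l' hx)))
    (abs_ne_zero.2 (gD_ne_zero l' hx))]

lemma X_append (l l' : List S.A) {x y : ℝ} (hx : x ∈ S.J) (hy : y ∈ S.J) :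
    S.X (l ++ l') x y = S.X l (S.gW l' x) (S.gW l' y) + S.X l' x y := by
  simp only [X, log_abs_gD_append l l' hx, log_abs_gD_append l l' hy]
  ring

lemma Delta_sub_Delta (a b : List S.A) (x y z : ℝ) :
    S.Delta a b x z - S.Delta a b y z = S.Delta a b x y := by
  simp only [Delta, X]
  ring

lemma Delta_append (a b α β : List S.A) {x y : ℝ} (hx : x ∈ S.J) (hy : y ∈ S.J) :
    S.Delta (a ++ α) (b ++ β) x y = S.X a (S.gW α x) (S.gW α y) -
      S.X b (S.gW β x) (S.gW β y) + S.Delta α β x y := by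
  simp only [Delta, X_append _ _ hx hy]
  ring

lemma Delta_append_append_same (a b u : List S.A) {x y : ℝ} (hx : x ∈ S.J) (hy : y ∈ S.J) :
    S.Delta (a ++ u) (b ++ u) x y = S.Delta a b (S.gW u x) (S.gW u y) := by
  rw [Delta_append a b u u hx hy]
  simp only [Delta, sub_self, add_zero]

lemma abs_g_sub_le (a : S.A) {x y : ℝ} (hx : x ∈ S.J) (hy : y ∈ S.J) :
    |S.g a x - S.g a y| ≤ S.κp * |x - y| :=
  (convex_Icc S.lo S.hi).norm_image_sub_le_of_norm_hasDerivWithin_le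
    (fun z hz => (S.hderiv a z hz).hasDerivWithinAt) (fun z hz => (S.hcontr a z hz).2) hy hx

lemma le_abs_g_sub (a : S.A) {x y : ℝ} (hx : x ∈ S.J) (hy : y ∈ S.J) :
    S.κm * |x - y| ≤ |S.g a x - S.g a y| := by
  wlog hxy : x < y generalizing x y
  · rcases (not_lt.1 hxy).eq_or_lt with rfl | hyx
    · simp
    · rw [abs_sub_comm x, abs_sub_comm (S.g a x)]
      exact this hy hx hyx
  have hsub : Set.Icc x y ⊆ Set.Icc S.lo S.hi := Set.Icc_subset_Icc hx.1 hy.2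
  obtain ⟨c, hc, hslope⟩ := exists_hasDerivAt_eq_slope (S.g a) (S.gd a) hxy
    (fun z hz => (S.hderiv a z (hsub hz)).continuousAt.continuousWithinAt)
    (fun z hz => S.hderiv a z (hsub (Set.Ioo_subset_Icc_self hz)))
  rw [eq_div_iff (sub_pos.2 hxy).ne'] at hslope
  rw [abs_sub_comm x, abs_sub_comm (S.g a x), ← hslope, abs_mul]
  gcongr
  exact (S.hcontr a c (hsub (Set.Ioo_subset_Icc_self hc))).1

lemma abs_gW_sub_le (l : List S.A) {x y : ℝ} (hx : x ∈ S.J) (hy : y ∈ S.J) :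
    |S.gW l x - S.gW l y| ≤ S.κp ^ l.length * |x - y| := by
  induction l with
  | nil => simp [gW]
  | cons a l ih =>
    rw [List.length_cons, pow_succ', mul_assoc]
    exact (abs_g_sub_le a (gW_mem_J l hx) (gW_mem_J l hy)).trans
      (mul_le_mul_of_nonneg_left ih S.κp_nonneg)

lemma le_abs_gW_sub (l : List S.A) {x y : ℝ} (hx : x ∈ S.J) (hy : y ∈ S.J) :
    S.κm ^ l.length * |x - y| ≤ |S.gW l x - S.gW l y| := by
  induction l with
  | nil => simp [gW]
  | cons a l ih =>
    rw [List.length_cons, pow_succ', mul_assoc]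
    exact (mul_le_mul_of_nonneg_left ih S.hκm.le).trans
      (le_abs_g_sub a (gW_mem_J l hx) (gW_mem_J l hy))

lemma injOn_g (a : S.A) : Set.InjOn (S.g a) S.J := fun x hx y hy hxy => by
  have hle := le_abs_g_sub a hx hy
  rw [hxy, sub_self, abs_zero] at hle
  exact sub_eq_zero.1 (abs_nonpos_iff.1 (nonpos_of_mul_nonpos_right hle S.hκm))

lemma continuousOn_gW (l : List S.A) : ContinuousOn (S.gW l) S.J := by
  induction l with
  | nil => exact continuousOn_id
  | cons a l ih =>
    exact ContinuousOn.comp (fun x hx => (S.hderiv a x hx).continuousAt.continuousWithinAt) ih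
      fun x hx => gW_mem_J l hx

lemma isCompact_cyl (l : List S.A) : IsCompact (S.cyl l) :=
  isCompact_Icc.image_of_continuousOn (continuousOn_gW l)

lemma measurableSet_cyl (l : List S.A) : MeasurableSet (S.cyl l) :=
  (isCompact_cyl l).isClosed.measurableSet

lemma cyl_nil : S.cyl [] = S.J := Set.image_id _

lemma cyl_append (l l' : List S.A) : S.cyl (l ++ l') = S.gW l '' S.cyl l' := by
  simp only [cyl, Set.image_image, gW_append]

lemma cyl_subset_J (l : List S.A) : S.cyl l ⊆ S.J :=
  Set.image_subset_iff.2 fun _ hx => gW_mem_J l hx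

lemma cyl_append_subset (l l' : List S.A) : S.cyl (l ++ l') ⊆ S.cyl l := by
  rw [cyl_append]
  exact Set.image_mono (cyl_subset_J l')

lemma gW_mem_cyl_append (l : List S.A) {l' : List S.A} {x : ℝ} (hx : x ∈ S.cyl l') :
    S.gW l x ∈ S.cyl (l ++ l') := by
  rw [cyl_append]
  exact Set.mem_image_of_mem _ hx

lemma abs_sub_le_diam_cyl {l : List S.A} {x y : ℝ} (hx : x ∈ S.cyl l) (hy : y ∈ S.cyl l) :
    |x - y| ≤ Metric.diam (S.cyl l) :=
  Metric.dist_le_diam_of_mem (isCompact_cyl l).isBounded hx hy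

lemma diam_cyl_le (l : List S.A) :
    Metric.diam (S.cyl l) ≤ S.κp ^ l.length * (S.hi - S.lo) := by
  have hκ := pow_nonneg S.κp_nonneg l.length
  refine Metric.diam_le_of_forall_dist_le (mul_nonneg hκ (sub_pos.2 S.hlohi).le) ?_
  rintro _ ⟨x, hx, rfl⟩ _ ⟨y, hy, rfl⟩
  exact (abs_gW_sub_le l hx hy).trans
    (mul_le_mul_of_nonneg_left (Real.dist_le_of_mem_Icc hx hy) hκ)

lemma le_diam_cyl (l : List S.A) :
    S.κm ^ l.length * (S.hi - S.lo) ≤ Metric.diam (S.cyl l) := by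
  rw [← abs_of_pos (sub_pos.2 S.hlohi)]
  exact (le_abs_gW_sub l S.hi_mem_J S.lo_mem_J).trans (abs_sub_le_diam_cyl
    (Set.mem_image_of_mem _ S.hi_mem_J) (Set.mem_image_of_mem _ S.lo_mem_J))

lemma disjoint_cyl {l l' : List S.A} (hlen : l.length = l'.length) (hne : l ≠ l') :
    Disjoint (S.cyl l) (S.cyl l') := by
  rw [Set.disjoint_left]
  rintro _ ⟨x, hx, rfl⟩ ⟨y, hy, heq⟩
  induction l generalizing l' with
  | nil => exact hne (List.length_eq_zero_iff.1 hlen.symm).symm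
  | cons a l ih =>
    obtain _ | ⟨b, l'⟩ := l'
    · simp at hlen
    change S.g b (S.gW l' y) = S.g a (S.gW l x) at heq
    rcases eq_or_ne a b with rfl | hab
    · exact ih (Nat.succ_injective hlen) (fun h => hne (by rw [h]))
        (injOn_g a (gW_mem_J l' hy) (gW_mem_J l hx) heq)
    · exact Set.disjoint_left.1 (S.hdisj a b hab) (Set.mem_image_of_mem _ (gW_mem_J l hx))
        ⟨_, gW_mem_J l' hy, heq⟩

lemma attract_subset_J : S.attract ⊆ S.J := fun x hx => by
  obtain ⟨a, ha⟩ := Set.mem_iUnion.1 (Set.mem_iInter.1 hx 0)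
  exact cyl_subset_J _ ha

lemma exists_mem_cyl {x : ℝ} (hx : x ∈ S.attract) (n : ℕ) : ∃ l ∈ words S.A n, x ∈ S.cyl l := by
  obtain _ | n := n
  · exact ⟨[], by simp, cyl_nil.ge (attract_subset_J hx)⟩
  · obtain ⟨a, ha⟩ := Set.mem_iUnion.1 (Set.mem_iInter.1 hx n)
    exact ⟨_, by simp, ha⟩

lemma exists_mem_cyl_append {l : List S.A} {x : ℝ} (hx : x ∈ S.attract) (hxl : x ∈ S.cyl l)
    (n : ℕ) : ∃ l' ∈ words S.A n, x ∈ S.cyl (l ++ l') := by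
  obtain ⟨v, hv, hxv⟩ := exists_mem_cyl hx (l.length + n)
  have hlen : v.length = l.length + n := mem_words.1 hv
  have htake : v.take l.length = l := by
    by_contra hne
    refine Set.disjoint_left.1 (disjoint_cyl (by simp [hlen]) hne) ?_ hxl
    rw [← List.take_append_drop l.length v] at hxv
    exact cyl_append_subset _ _ hxv
  refine ⟨v.drop l.length, by simp [hlen], ?_⟩
  rwa [← List.take_append_drop l.length v, htake] at hxv

end FiniteIFS

namespace FiniteGibbsIFS

variable (S : FiniteGibbsIFS)

instance : IsProbabilityMeasure S.μ := S.hprob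

lemma Cstar_pos : 0 < S.Cstar := zero_lt_one.trans_le S.hCstar

lemma Cstar_rpow_δ_le : S.Cstar ^ S.δ ≤ S.Cstar :=
  Real.rpow_le_self_of_one_le S.hCstar S.hδ.2.le

lemma attract_nonempty : S.attract.Nonempty := by
  by_contra hempty
  have huniv : S.μ Set.univ = 0 := by
    simpa [Set.not_nonempty_iff_eq_empty.1 hempty] using S.hsupp
  exact one_ne_zero (measure_univ.symm.trans huniv)

/-- The mass `μ(I_l)` of the cylinder of the word `l`, as a real number. -/
noncomputable def mass (l : List S.A) : ℝ := S.μ.real (S.cyl l)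

variable {S}

lemma refPt_mem_J (l : List S.A) : S.refPt l ∈ S.J := FiniteIFS.cyl_subset_J l (S.refPt_mem l)

lemma measureReal_le_of_inter_attract_subset {s E : Set ℝ} (hsE : s ∩ S.attract ⊆ E) :
    S.μ.real s ≤ S.μ.real E := by
  have hae : ∀ᵐ x ∂S.μ, x ∈ S.attract := S.hsupp
  refine ENNReal.toReal_mono (measure_ne_top _ _) (measure_mono_ae ?_)
  filter_upwards [hae] with x hx hxs using hsE ⟨hxs, hx⟩

lemma mass_nonneg (l : List S.A) : 0 ≤ S.mass l := measureReal_nonneg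

lemma mass_le_one (l : List S.A) : S.mass l ≤ 1 := measureReal_le_one

lemma mass_nil : S.mass [] = 1 := by
  refine le_antisymm (mass_le_one []) ?_
  rw [← probReal_univ (μ := S.μ)]
  exact measureReal_le_of_inter_attract_subset fun x hx =>
    FiniteIFS.cyl_nil.ge (FiniteIFS.attract_subset_J hx.2)

lemma sum_mass_append_le {l : List S.A} {n : ℕ} {T : Finset (List S.A)} (hT : T ⊆ words S.A n)
    {E : Set ℝ} (hTE : ∀ l' ∈ T, S.cyl (l ++ l') ∩ S.attract ⊆ E) :
    ∑ l' ∈ T, S.mass (l ++ l') ≤ S.μ.real E := by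
  have hdisj : Set.PairwiseDisjoint (↑T : Set (List S.A)) fun l' => S.cyl (l ++ l') := by
    intro u hu v hv huv
    refine FiniteIFS.disjoint_cyl ?_ fun h => huv (List.append_cancel_left h)
    simp only [List.length_append, mem_words.1 (hT hu), mem_words.1 (hT hv)]
  have hunion : S.μ.real (⋃ l' ∈ T, S.cyl (l ++ l')) = ∑ l' ∈ T, S.mass (l ++ l') :=
    measureReal_biUnion_finset hdisj fun l' _ => FiniteIFS.measurableSet_cyl _
  rw [← hunion]
  refine measureReal_le_of_inter_attract_subset ?_
  simpa only [Set.iUnion_inter, Set.iUnion_subset_iff] using hTE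

lemma sum_mass_append (l : List S.A) (n : ℕ) :
    ∑ l' ∈ words S.A n, S.mass (l ++ l') = S.mass l := by
  refine le_antisymm (sum_mass_append_le subset_rfl fun l' _ =>
    Set.inter_subset_left.trans (FiniteIFS.cyl_append_subset l l')) ?_
  calc S.mass l ≤ S.μ.real (⋃ l' ∈ words S.A n, S.cyl (l ++ l')) := by
        refine measureReal_le_of_inter_attract_subset fun x hx => ?_
        simpa only [Set.mem_iUnion, exists_prop] using
          FiniteIFS.exists_mem_cyl_append hx.2 hx.1 n
    _ ≤ ∑ l' ∈ words S.A n, S.mass (l ++ l') := measureReal_biUnion_finset_le _ _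

lemma sum_mass_words (n : ℕ) : ∑ l ∈ words S.A n, S.mass l = 1 := by
  simpa only [List.nil_append, mass_nil] using sum_mass_append (S := S) [] n

lemma mass_append_le (l l' : List S.A) :
    S.mass (l ++ l') ≤ S.Cstar ^ 4 * (S.mass l * S.mass l') := by
  have hC := S.Cstar_pos.le
  calc S.mass (l ++ l') ≤ S.Cstar * Metric.diam (S.cyl (l ++ l')) ^ S.δ := (S.hfrostman _).1
    _ ≤ S.Cstar * (S.Cstar * (Metric.diam (S.cyl l) * Metric.diam (S.cyl l'))) ^ S.δ := by
        gcongr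
        · exact S.hδ.1.le
        · exact (S.hmult l l').1
    _ = S.Cstar * (S.Cstar ^ S.δ *
          (Metric.diam (S.cyl l) ^ S.δ * Metric.diam (S.cyl l') ^ S.δ)) := by
        rw [Real.mul_rpow hC (by positivity), Real.mul_rpow Metric.diam_nonneg Metric.diam_nonneg]
    _ ≤ S.Cstar * (S.Cstar * ((S.Cstar * S.mass l) * (S.Cstar * S.mass l'))) := by
        gcongr
        · exact S.Cstar_rpow_δ_le
        · exact mul_nonneg hC (mass_nonneg l)
        · exact (S.hfrostman l).2
        · exact (S.hfrostman l').2
    _ = S.Cstar ^ 4 * (S.mass l * S.mass l') := by ring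

lemma mass_mul_mass_le (l l' : List S.A) :
    S.mass l * S.mass l' ≤ S.Cstar ^ 4 * S.mass (l ++ l') := by
  have hC := S.Cstar_pos.le
  calc S.mass l * S.mass l'
      ≤ (S.Cstar * Metric.diam (S.cyl l) ^ S.δ) * (S.Cstar * Metric.diam (S.cyl l') ^ S.δ) :=
        mul_le_mul (S.hfrostman l).1 (S.hfrostman l').1 (mass_nonneg l') (by positivity)
    _ = S.Cstar ^ 2 * (Metric.diam (S.cyl l) * Metric.diam (S.cyl l')) ^ S.δ := by
        rw [Real.mul_rpow Metric.diam_nonneg Metric.diam_nonneg]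
        ring
    _ ≤ S.Cstar ^ 2 * (S.Cstar * Metric.diam (S.cyl (l ++ l'))) ^ S.δ := by
        exact mul_le_mul_of_nonneg_left (Real.rpow_le_rpow (by positivity) (S.hmult l l').2
          S.hδ.1.le) (by positivity)
    _ = S.Cstar ^ 2 * (S.Cstar ^ S.δ * Metric.diam (S.cyl (l ++ l')) ^ S.δ) := by
        rw [Real.mul_rpow hC Metric.diam_nonneg]
    _ ≤ S.Cstar ^ 2 * (S.Cstar * (S.Cstar * S.mass (l ++ l'))) := by
        gcongr
        · exact S.Cstar_rpow_δ_le
        · exact (S.hfrostman _).2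
    _ = S.Cstar ^ 4 * S.mass (l ++ l') := by ring

variable (S) in
lemma eventually_forall_mass_le {ε : ℝ} (hε : 0 < ε) :
    ∀ᶠ n in Filter.atTop, ∀ l ∈ words S.A n, S.mass l ≤ ε := by
  have hdiam : Filter.Tendsto (fun n => S.κp ^ n * (S.hi - S.lo)) Filter.atTop (nhds 0) := by
    simpa only [zero_mul] using
      (tendsto_pow_atTop_nhds_zero_of_lt_one S.κp_nonneg S.hκp).mul_const (S.hi - S.lo)
  have hbound : Filter.Tendsto (fun n => S.Cstar * (S.κp ^ n * (S.hi - S.lo)) ^ S.δ)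
      Filter.atTop (nhds 0) := by
    simpa only [Real.zero_rpow S.hδ.1.ne', mul_zero] using
      (hdiam.rpow_const (Or.inr S.hδ.1.le)).const_mul S.Cstar
  filter_upwards [hbound.eventually_lt_const hε] with n hn l hl
  obtain rfl := mem_words.1 hl
  calc S.mass l ≤ S.Cstar * Metric.diam (S.cyl l) ^ S.δ := (S.hfrostman l).1
    _ ≤ S.Cstar * (S.κp ^ l.length * (S.hi - S.lo)) ^ S.δ := by
        have hC := S.Cstar_pos.le
        gcongr
        · exact S.hδ.1.le
        · exact FiniteIFS.diam_cyl_le l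
    _ ≤ ε := hn.le

variable (S) in
lemma exists_pow_le_mass :
    ∃ c > 0, ∃ lam ∈ Set.Ioo (0 : ℝ) 1, ∀ l : List S.A, c * lam ^ l.length ≤ S.mass l := by
  have hJ : 0 < S.hi - S.lo := sub_pos.2 S.hlohi
  have hκm := S.hκm
  refine ⟨(S.hi - S.lo) ^ S.δ / S.Cstar, div_pos (Real.rpow_pos_of_pos hJ _) S.Cstar_pos,
    S.κm ^ S.δ, ⟨Real.rpow_pos_of_pos hκm _,
      Real.rpow_lt_one hκm.le (S.κm_le_κp.trans_lt S.hκp) S.hδ.1⟩, fun l => ?_⟩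
  rw [div_mul_eq_mul_div, div_le_iff₀' S.Cstar_pos]
  calc (S.hi - S.lo) ^ S.δ * (S.κm ^ S.δ) ^ l.length
      = (S.κm ^ l.length * (S.hi - S.lo)) ^ S.δ := by
        rw [Real.mul_rpow (by positivity) hJ.le, Real.rpow_pow_comm hκm.le, mul_comm]
    _ ≤ Metric.diam (S.cyl l) ^ S.δ := by
        gcongr
        · exact S.hδ.1.le
        · exact FiniteIFS.le_diam_cyl l
    _ ≤ S.Cstar * S.mass l := (S.hfrostman l).2

lemma mass_pos (l : List S.A) : 0 < S.mass l := by
  obtain ⟨c, hc, lam, hlam, hmass⟩ := S.exists_pow_le_mass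
  exact (mul_pos hc (pow_pos hlam.1 _)).trans_le (hmass l)

lemma abs_X_le (a : List S.A) {l : List S.A} {x y : ℝ} (hx : x ∈ S.cyl l) (hy : y ∈ S.cyl l) :
    |S.X a x y| ≤ S.Cstar ^ 2 * S.mass l := by
  have hC := S.Cstar_pos.le
  calc |S.X a x y| ≤ S.Cstar * |x - y| ^ S.δ :=
        S.hXHolder a x (FiniteIFS.cyl_subset_J l hx) y (FiniteIFS.cyl_subset_J l hy)
    _ ≤ S.Cstar * Metric.diam (S.cyl l) ^ S.δ := by
        gcongr
        · exact S.hδ.1.le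
        · exact FiniteIFS.abs_sub_le_diam_cyl hx hy
    _ ≤ S.Cstar * (S.Cstar * S.mass l) := by
        gcongr
        exact (S.hfrostman l).2
    _ = S.Cstar ^ 2 * S.mass l := by ring

lemma w_mul_w_le (l l' : List S.A) {x y : ℝ} (hx : x ∈ S.J) (hy : y ∈ S.J) :
    S.w l x * S.w l' y ≤ S.Cstar ^ 2 * (S.mass l * S.mass l') := by
  have hw_nonneg : 0 ≤ S.w l' y :=
    nonneg_of_mul_nonneg_right ((mass_nonneg l').trans (S.hw l' y hy).1) S.Cstar_pos
  calc S.w l x * S.w l' y ≤ (S.Cstar * S.mass l) * (S.Cstar * S.mass l') :=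
        mul_le_mul (S.hw l x hx).2 (S.hw l' y hy).2 hw_nonneg
          (mul_nonneg S.Cstar_pos.le (mass_nonneg l))
    _ = S.Cstar ^ 2 * (S.mass l * S.mass l') := by ring

/-- The mass of the descendants of `I_l`, `n` generations further down, that meet `E`. -/
noncomputable def coverMass (S : FiniteGibbsIFS) (E : Set ℝ) (l : List S.A) (n : ℕ) : ℝ :=
  ∑ l' ∈ words S.A n, {v | (S.cyl v ∩ E).Nonempty}.indicator S.mass (l ++ l')

lemma coverMass_nonneg (E : Set ℝ) (l : List S.A) (n : ℕ) : 0 ≤ S.coverMass E l n :=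
  Finset.sum_nonneg fun _ _ => Set.indicator_nonneg (fun v _ => mass_nonneg v) _

lemma coverMass_le_mass (E : Set ℝ) (l : List S.A) (n : ℕ) : S.coverMass E l n ≤ S.mass l := by
  rw [← sum_mass_append l n]
  exact Finset.sum_le_sum fun _ _ => Set.indicator_le_self' (fun v _ => mass_nonneg v) _

lemma coverMass_eq_zero {E : Set ℝ} {l : List S.A} (hE : ¬(S.cyl l ∩ E).Nonempty) (n : ℕ) :
    S.coverMass E l n = 0 := by
  refine Finset.sum_eq_zero fun l' _ => Set.indicator_of_notMem (fun hne => hE ?_) _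
  exact hne.mono (Set.inter_subset_inter_left E (FiniteIFS.cyl_append_subset l l'))

lemma coverMass_add (E : Set ℝ) (l : List S.A) (m n : ℕ) :
    S.coverMass E l (m + n) = ∑ l' ∈ words S.A m, S.coverMass E (l ++ l') n := by
  simp only [coverMass, sum_words_add, List.append_assoc]

lemma coverMass_add_le {E : Set ℝ} {l : List S.A} {m n : ℕ} {η : ℝ}
    (hη : ∀ l' ∈ words S.A m, S.coverMass E (l ++ l') n ≤ η * S.mass (l ++ l')) :
    S.coverMass E l (m + n) ≤ η * S.coverMass E l m := by
  rw [coverMass_add, coverMass, Finset.mul_sum]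
  refine Finset.sum_le_sum fun l' hl' => ?_
  by_cases hE : l ++ l' ∈ {v | (S.cyl v ∩ E).Nonempty}
  · rw [Set.indicator_of_mem hE]
    exact hη l' hl'
  · rw [Set.indicator_of_notMem hE, mul_zero, coverMass_eq_zero hE]

lemma coverMass_anti (E : Set ℝ) (l : List S.A) : Antitone (S.coverMass E l) := by
  intro m n hmn
  obtain ⟨p, rfl⟩ := Nat.exists_eq_add_of_le hmn
  rw [← one_mul (S.coverMass E l m)]
  exact coverMass_add_le fun l' _ => by simpa only [one_mul] using coverMass_le_mass E _ p

lemma coverMass_append_le (E : Set ℝ) (l l' : List S.A) (n : ℕ) :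
    S.coverMass E (l ++ l') n ≤ S.coverMass E l (l'.length + n) := by
  rw [coverMass_add]
  exact Finset.single_le_sum (f := fun v => S.coverMass E (l ++ v) n)
    (fun _ _ => coverMass_nonneg _ _ _) (mem_words.2 rfl)

lemma coverMass_mul_le_pow {E : Set ℝ} {N k : ℕ} {η : ℝ} (hη0 : 0 ≤ η)
    (hη : ∀ j < k, ∀ l ∈ words S.A (j * N), S.coverMass E l N ≤ η * S.mass l) :
    S.coverMass E [] (k * N) ≤ η ^ k := by
  induction k with
  | zero => simpa only [pow_zero, mass_nil] using coverMass_le_mass E [] (0 * N)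
  | succ k ih =>
    calc S.coverMass E [] ((k + 1) * N) = S.coverMass E [] (k * N + N) := by rw [Nat.succ_mul]
      _ ≤ η * S.coverMass E [] (k * N) := coverMass_add_le (hη k k.lt_succ_self)
      _ ≤ η * η ^ k := by
          gcongr
          exact ih fun j hj => hη j (hj.trans k.lt_succ_self)
      _ = η ^ (k + 1) := (pow_succ' η k).symm

lemma exists_coverMass_le_measureReal {f D : ℝ → ℝ} {l : List S.A} {n : ℕ} {r s : ℝ}
    (hfD : ∀ x ∈ S.cyl l, ∀ y ∈ S.cyl l, |f x - f y - (D x - D y)| ≤ r)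
    (hD : ∀ l' ∈ words S.A n, ∀ x ∈ S.cyl (l ++ l'), ∀ y ∈ S.cyl (l ++ l'), |D x - D y| ≤ r)
    (hs : s ≤ r) :
    ∃ v, S.coverMass {x | |f x| ≤ s} l n ≤
      S.μ.real {x | x ∈ S.attract ∧ D x ∈ Set.Icc (v - 3 * r) (v + 3 * r)} := by
  classical
  refine ⟨D (S.refPt l) - f (S.refPt l), ?_⟩
  simp only [coverMass, Set.indicator_apply]
  rw [← Finset.sum_filter]
  refine sum_mass_append_le (Finset.filter_subset _ _) ?_
  rintro l' hl' y ⟨hy, hyF⟩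
  obtain ⟨hl', x, hx, hfx⟩ := Finset.mem_filter.1 hl'
  have hDxy := abs_le.1 (hD l' hl' x hx y hy)
  have hfDx := abs_le.1 (hfD x (FiniteIFS.cyl_append_subset l l' hx) _ (S.refPt_mem l))
  have hfx' := abs_le.1 (hfx.trans hs)
  exact ⟨hyF, by linarith, by linarith⟩

lemma abs_X_le_mass_mul_mass (a : List S.A) {l l' : List S.A} {x y : ℝ}
    (hx : x ∈ S.cyl (l ++ l')) (hy : y ∈ S.cyl (l ++ l')) :
    |S.X a x y| ≤ S.Cstar ^ 6 * (S.mass l * S.mass l') := by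
  calc |S.X a x y| ≤ S.Cstar ^ 2 * S.mass (l ++ l') := abs_X_le a hx hy
    _ ≤ S.Cstar ^ 2 * (S.Cstar ^ 4 * (S.mass l * S.mass l')) := by
        gcongr
        exact mass_append_le l l'
    _ = S.Cstar ^ 6 * (S.mass l * S.mass l') := by ring

lemma abs_Delta_append_sub_Delta_le {η : ℝ} {α β : List S.A} (hα : S.mass α ≤ η)
    (hβ : S.mass β ≤ η) (a b : List S.A) {l : List S.A} {x y : ℝ} (hx : x ∈ S.cyl l)
    (hy : y ∈ S.cyl l) :
    |S.Delta (a ++ α) (b ++ β) x y - S.Delta α β x y| ≤ 2 * S.Cstar ^ 6 * (η * S.mass l) := by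
  have hX (c : List S.A) {ξ : List S.A} (hξ : S.mass ξ ≤ η) :
      |S.X c (S.gW ξ x) (S.gW ξ y)| ≤ S.Cstar ^ 6 * (η * S.mass l) := by
    refine (abs_X_le_mass_mul_mass c (FiniteIFS.gW_mem_cyl_append ξ hx)
      (FiniteIFS.gW_mem_cyl_append ξ hy)).trans ?_
    gcongr
    exact mass_nonneg l
  simp only [FiniteIFS.Delta_append a b α β (FiniteIFS.cyl_subset_J l hx)
    (FiniteIFS.cyl_subset_J l hy), add_sub_cancel_right]
  exact (abs_sub _ _).trans (by linarith [hX a hα, hX b hβ])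

lemma abs_Delta_le {η : ℝ} (α β : List S.A) {l l' : List S.A} (hl' : S.mass l' ≤ η) {x y : ℝ}
    (hx : x ∈ S.cyl (l ++ l')) (hy : y ∈ S.cyl (l ++ l')) :
    |S.Delta α β x y| ≤ 2 * S.Cstar ^ 6 * (η * S.mass l) := by
  have hX (c : List S.A) : |S.X c x y| ≤ S.Cstar ^ 6 * (η * S.mass l) := by
    refine (abs_X_le_mass_mul_mass c hx hy).trans ?_
    rw [mul_comm (S.mass l)]
    gcongr
    exact mass_nonneg l
  exact (abs_sub _ _).trans (by linarith [hX α, hX β])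

lemma coverMass_Delta_append_le {CM η : ℝ} {N : ℕ} {α β : List S.A} (hα : α ∈ words S.A N)
    (hβ : β ∈ words S.A N)
    (hαβ : ∀ x₀ ∈ S.attract, ∀ u v : ℝ, u ≤ v →
      S.μ {x | x ∈ S.attract ∧ S.Delta α β x x₀ ∈ Set.Icc u v} ≤ ENNReal.ofReal (CM * (v - u)))
    (hη : ∀ l ∈ words S.A N, S.mass l ≤ η) (hCMη : CM * (12 * S.Cstar ^ 6) * η ≤ 1 / 2)
    (a b l : List S.A) {z s : ℝ} (hs : s ≤ 2 * S.Cstar ^ 6 * (η * S.mass l)) :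
    S.coverMass {x | |S.Delta (a ++ α) (b ++ β) x z| ≤ s} l N ≤ 1 / 2 * S.mass l := by
  obtain ⟨z₀, hz₀⟩ := S.attract_nonempty
  have hml := mass_nonneg l
  have hη0 : 0 ≤ η := (mass_nonneg α).trans (hη α hα)
  set r := 2 * S.Cstar ^ 6 * (η * S.mass l) with hr
  have hparent : ∀ x ∈ S.cyl l, ∀ y ∈ S.cyl l, |S.Delta (a ++ α) (b ++ β) x z -
      S.Delta (a ++ α) (b ++ β) y z - (S.Delta α β x z₀ - S.Delta α β y z₀)| ≤ r := by
    intro x hx y hy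
    simp only [FiniteIFS.Delta_sub_Delta]
    exact abs_Delta_append_sub_Delta_le (hη α hα) (hη β hβ) a b hx hy
  have hchild : ∀ l' ∈ words S.A N, ∀ x ∈ S.cyl (l ++ l'), ∀ y ∈ S.cyl (l ++ l'),
      |S.Delta α β x z₀ - S.Delta α β y z₀| ≤ r := by
    intro l' hl' x hx y hy
    rw [FiniteIFS.Delta_sub_Delta]
    exact abs_Delta_le α β (hη l' hl') hx hy
  obtain ⟨v, hv⟩ := exists_coverMass_le_measureReal hparent hchild hs
  have hr0 : 0 ≤ r := by positivity
  refine hv.trans (ENNReal.toReal_le_of_le_ofReal (by positivity) ?_)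
  refine (hαβ z₀ hz₀ _ _ (by linarith)).trans (ENNReal.ofReal_le_ofReal ?_)
  calc CM * (v + 3 * r - (v - 3 * r)) = CM * (12 * S.Cstar ^ 6) * η * S.mass l := by
        rw [hr]
        ring
    _ ≤ 1 / 2 * S.mass l := mul_le_mul_of_nonneg_right hCMη hml

/-- Temporal decay: the descendants that meet a sublevel set of the temporal distance of two
words ending in `α` and `β` lose half of their mass every `N` generations, as long as the level
is below `c θ ^ k`; the bound is uniform in the prefixes `a` and `b`. -/
def TemporalDecay (S : FiniteGibbsIFS) (α β : List S.A) (N : ℕ) (c θ : ℝ) : Prop :=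
  ∀ a b : List S.A, ∀ z s : ℝ, ∀ k : ℕ, s ≤ c * θ ^ k →
    S.coverMass {x | |S.Delta (a ++ α) (b ++ β) x z| ≤ s} [] (k * N) ≤ (1 / 2) ^ k

lemma MNL.exists_temporalDecay {CM : ℝ} (hMNL : S.MNL CM) :
    ∃ N ≥ 1, ∃ α ∈ words S.A N, ∃ β ∈ words S.A N, ∃ c > 0, ∃ θ ∈ Set.Ioo (0 : ℝ) 1,
      S.TemporalDecay α β N c θ := by
  obtain ⟨η, hη, hCMη⟩ := exists_pos_mul_lt one_half_pos (CM * (12 * S.Cstar ^ 6))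
  obtain ⟨N, hNη, hN⟩ :=
    ((S.eventually_forall_mass_le hη).and (Filter.eventually_ge_atTop 1)).exists
  obtain ⟨α, β, hαβ⟩ := hMNL N hN
  obtain ⟨c₀, hc₀, lam, ⟨hlam0, hlam1⟩, hmass⟩ := S.exists_pow_le_mass
  have hC := S.Cstar_pos
  refine ⟨N, hN, List.ofFn α, by simp, List.ofFn β, by simp, 2 * S.Cstar ^ 6 * η * c₀,
    by positivity, lam ^ N, ⟨by positivity, pow_lt_one₀ hlam0.le hlam1 (by omega)⟩, ?_⟩
  intro a b z s k hs
  refine coverMass_mul_le_pow one_half_pos.le fun j hj l hl => ?_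
  refine coverMass_Delta_append_le (by simp) (by simp) hαβ hNη hCMη.le a b l (hs.trans ?_)
  calc 2 * S.Cstar ^ 6 * η * c₀ * (lam ^ N) ^ k
      ≤ 2 * S.Cstar ^ 6 * η * c₀ * (lam ^ N) ^ j := by
        refine mul_le_mul_of_nonneg_left ?_ (by positivity)
        exact pow_le_pow_of_le_one (by positivity) (pow_le_one₀ hlam0.le hlam1.le) hj.le
    _ = 2 * S.Cstar ^ 6 * (η * (c₀ * lam ^ l.length)) := by
        rw [mem_words.1 hl, ← pow_mul, mul_comm j N]
        ring
    _ ≤ 2 * S.Cstar ^ 6 * (η * S.mass l) := by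
        gcongr
        exact hmass l

lemma mass_mul_sum_indicator_le_coverMass (E : Set ℝ) (u : List S.A) (n : ℕ) :
    S.mass u * ∑ e ∈ words S.A n, {e | S.gW u (S.refPt e) ∈ E}.indicator S.mass e ≤
      S.Cstar ^ 4 * S.coverMass E u n := by
  rw [coverMass, Finset.mul_sum, Finset.mul_sum]
  refine Finset.sum_le_sum fun e _ => ?_
  by_cases he : S.gW u (S.refPt e) ∈ E
  · have hmeets : u ++ e ∈ {v | (S.cyl v ∩ E).Nonempty} :=
      ⟨_, FiniteIFS.gW_mem_cyl_append u (S.refPt_mem e), he⟩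
    rw [Set.indicator_of_mem (by exact he), Set.indicator_of_mem hmeets]
    exact mass_mul_mass_le u e
  · rw [Set.indicator_of_notMem (by exact he), mul_zero]
    exact mul_nonneg (pow_nonneg S.Cstar_pos.le _)
      (Set.indicator_nonneg (fun v _ => mass_nonneg v) _)

lemma TemporalDecay.sum_indicator_le {α β : List S.A} {N : ℕ} {c θ : ℝ}
    (h : S.TemporalDecay α β N c θ) {z s : ℝ} (hz : z ∈ S.J) {k n : ℕ} (hs : s ≤ c * θ ^ k)
    (hkn : k * N ≤ n) (a b u : List S.A) :
    ∑ e ∈ words S.A n,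
        {e | |S.Delta (a ++ (α ++ u)) (b ++ (β ++ u)) (S.refPt e) z| ≤ s}.indicator S.mass e ≤
      S.Cstar ^ 4 * (1 / 2) ^ k / S.mass u := by
  set E : Set ℝ := {x | |S.Delta (a ++ α) (b ++ β) x (S.gW u z)| ≤ s} with hE
  have hset : {e | |S.Delta (a ++ (α ++ u)) (b ++ (β ++ u)) (S.refPt e) z| ≤ s} =
      {e | S.gW u (S.refPt e) ∈ E} := by
    ext e
    simp only [hE, Set.mem_ofPred_eq, ← List.append_assoc,
      FiniteIFS.Delta_append_append_same (a ++ α) (b ++ β) u (refPt_mem_J e) hz]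
  rw [hset, le_div_iff₀' (mass_pos u)]
  calc S.mass u * ∑ e ∈ words S.A n, {e | S.gW u (S.refPt e) ∈ E}.indicator S.mass e
      ≤ S.Cstar ^ 4 * S.coverMass E u n := mass_mul_sum_indicator_le_coverMass E u n
    _ ≤ S.Cstar ^ 4 * (1 / 2) ^ k := by
        gcongr
        calc S.coverMass E u n ≤ S.coverMass E [] (u.length + n) := coverMass_append_le E [] u n
          _ ≤ S.coverMass E [] (k * N) := coverMass_anti E [] (hkn.trans (Nat.le_add_left n _))
          _ ≤ (1 / 2) ^ k := h a b _ s k hs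

lemma suffixSum_mass_le_one (n : ℕ) (u : List S.A) : suffixSum n S.mass u ≤ 1 := by
  rw [← sum_mass_words (S := S) (n - u.length)]
  refine Finset.sum_le_sum fun a _ => ?_
  rw [← sum_mass_append a u.length]
  exact Finset.single_le_sum (f := fun v => S.mass (a ++ v)) (fun _ _ => mass_nonneg _)
    (mem_words.2 rfl)

lemma suffixSum_mass_le (n : ℕ) (u : List S.A) :
    suffixSum n S.mass u ≤ S.Cstar ^ 4 * S.mass u := by
  calc suffixSum n S.mass u
      ≤ ∑ a ∈ words S.A (n - u.length), S.Cstar ^ 4 * (S.mass a * S.mass u) :=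
        Finset.sum_le_sum fun a _ => mass_append_le a u
    _ = S.Cstar ^ 4 * S.mass u := by
        rw [← Finset.mul_sum, ← Finset.sum_mul, sum_mass_words, one_mul]

lemma mass_le_suffixSum_mass (n : ℕ) (u : List S.A) :
    S.mass u ≤ S.Cstar ^ 4 * suffixSum n S.mass u := by
  calc S.mass u = ∑ a ∈ words S.A (n - u.length), S.mass a * S.mass u := by
        rw [← Finset.sum_mul, sum_mass_words, one_mul]
    _ ≤ ∑ a ∈ words S.A (n - u.length), S.Cstar ^ 4 * S.mass (a ++ u) :=
        Finset.sum_le_sum fun a _ => mass_mul_mass_le a u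
    _ = S.Cstar ^ 4 * suffixSum n S.mass u := by rw [← Finset.mul_sum, suffixSum]

lemma suffixSum_mass_sub_le {κ : ℝ} {ξ : List S.A} (hκ0 : 0 ≤ κ) (hκ : κ ≤ S.mass ξ) (n : ℕ)
    (u : List S.A) :
    suffixSum n S.mass u - suffixSum n S.mass (ξ ++ u) ≤
      (1 - κ / S.Cstar ^ 12) * suffixSum n S.mass u := by
  have hC := S.Cstar_pos
  have hmain : κ * suffixSum n S.mass u ≤ S.Cstar ^ 12 * suffixSum n S.mass (ξ ++ u) := by
    calc κ * suffixSum n S.mass u ≤ κ * (S.Cstar ^ 4 * S.mass u) := by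
          gcongr
          exact suffixSum_mass_le n u
      _ ≤ S.Cstar ^ 4 * (S.mass ξ * S.mass u) := by
          rw [mul_left_comm]
          gcongr
          exact mass_nonneg u
      _ ≤ S.Cstar ^ 4 * (S.Cstar ^ 4 * (S.Cstar ^ 4 * suffixSum n S.mass (ξ ++ u))) := by
          refine mul_le_mul_of_nonneg_left ((mass_mul_mass_le ξ u).trans ?_) (by positivity)
          exact mul_le_mul_of_nonneg_left (mass_le_suffixSum_mass n _) (by positivity)
      _ = S.Cstar ^ 12 * suffixSum n S.mass (ξ ++ u) := by ring
  rw [sub_mul, one_mul, div_mul_eq_mul_div, sub_le_sub_iff_left, div_le_iff₀' (by positivity)]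
  exact hmain

variable (S) in
lemma exists_suffixSum_mass_sub_le {κ : ℝ} (hκ : κ ∈ Set.Ioc (0 : ℝ) 1) :
    ∃ q ∈ Set.Ico (0 : ℝ) 1, ∀ ξ, κ ≤ S.mass ξ → ∀ n u,
      suffixSum n S.mass u - suffixSum n S.mass (ξ ++ u) ≤ q * suffixSum n S.mass u := by
  obtain ⟨hκ0, hκ1⟩ := hκ
  have hC := S.Cstar_pos
  have hκC : κ ≤ S.Cstar ^ 12 := hκ1.trans (one_le_pow₀ S.hCstar)
  exact ⟨1 - κ / S.Cstar ^ 12, ⟨sub_nonneg.2 (div_le_one_of_le₀ hκC (by positivity)),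
    sub_lt_self _ (by positivity)⟩, fun ξ hξ => suffixSum_mass_sub_le hκ0.le hξ⟩

/-- The words `l` for which the reference point `x_e` satisfies
`|X_l(x_e, z) - t(x_e)| ≤ σ`. -/
def nearWords (S : FiniteGibbsIFS) (t : ℝ → ℝ) (σ z : ℝ) (e : List S.A) : Set (List S.A) :=
  {l | S.X l (S.refPt e) z ∈ Set.Icc (t (S.refPt e) - σ) (t (S.refPt e) + σ)}

/-- The total mass of the words of length `n` in `nearWords` that end in `v`. -/
noncomputable def nearMass (S : FiniteGibbsIFS) (t : ℝ → ℝ) (σ z : ℝ) (n : ℕ)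
    (e v : List S.A) : ℝ :=
  suffixSum n ((S.nearWords t σ z e).indicator S.mass) v

lemma nearMass_nonneg (t : ℝ → ℝ) (σ z : ℝ) (n : ℕ) (e v : List S.A) :
    0 ≤ S.nearMass t σ z n e v :=
  suffixSum_nonneg (fun l => Set.indicator_nonneg (fun l _ => mass_nonneg l) l) n v

/-- If both `l` and `l'` are near, then the unknown value `t(x_e)` cancels in `Δ_{l,l'}(x_e, z)`. -/
lemma mass_mul_indicator_nearWords_le (t : ℝ → ℝ) (σ z : ℝ) (e l l' : List S.A) :
    S.mass e * ((S.nearWords t σ z e).indicator S.mass l *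
        (S.nearWords t σ z e).indicator S.mass l') ≤
      S.mass l * S.mass l' *
        {e | |S.Delta l l' (S.refPt e) z| ≤ 2 * σ}.indicator S.mass e := by
  have hrhs : 0 ≤ S.mass l * S.mass l' *
      {e | |S.Delta l l' (S.refPt e) z| ≤ 2 * σ}.indicator S.mass e :=
    mul_nonneg (mul_nonneg (mass_nonneg l) (mass_nonneg l'))
      (Set.indicator_nonneg (fun e _ => mass_nonneg e) e)
  by_cases hl : l ∈ S.nearWords t σ z e
  swap
  · simpa only [Set.indicator_of_notMem hl, zero_mul, mul_zero] using hrhs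
  by_cases hl' : l' ∈ S.nearWords t σ z e
  swap
  · simpa only [Set.indicator_of_notMem hl', mul_zero] using hrhs
  have hX : |S.X l (S.refPt e) z - S.X l' (S.refPt e) z| ≤ 2 * σ :=
    abs_le.2 ⟨by linarith [hl.1, hl'.2], by linarith [hl.2, hl'.1]⟩
  have hΔ : e ∈ {e | |S.Delta l l' (S.refPt e) z| ≤ 2 * σ} := hX
  rw [Set.indicator_of_mem hl, Set.indicator_of_mem hl', Set.indicator_of_mem hΔ]
  exact (mul_comm _ _).le

lemma TemporalDecay.sum_mass_mul_nearMass_mul_nearMass_le {α β : List S.A} {N : ℕ} {c θ : ℝ}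
    (h : S.TemporalDecay α β N c θ) (t : ℝ → ℝ) {σ z : ℝ} (hz : z ∈ S.J) {k n : ℕ}
    (hσ : 2 * σ ≤ c * θ ^ k) (hkn : k * N ≤ n) (u : List S.A) :
    ∑ e ∈ words S.A n,
        S.mass e * (S.nearMass t σ z n e (α ++ u) * S.nearMass t σ z n e (β ++ u)) ≤
      S.Cstar ^ 4 * (1 / 2) ^ k / S.mass u := by
  set R := S.Cstar ^ 4 * (1 / 2) ^ k / S.mass u
  have hR : 0 ≤ R := by
    have := mass_pos u
    positivity
  set p := n - (α ++ u).length
  set p' := n - (β ++ u).length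
  calc ∑ e ∈ words S.A n,
        S.mass e * (S.nearMass t σ z n e (α ++ u) * S.nearMass t σ z n e (β ++ u))
      = ∑ a ∈ words S.A p, ∑ b ∈ words S.A p', ∑ e ∈ words S.A n,
          S.mass e * ((S.nearWords t σ z e).indicator S.mass (a ++ (α ++ u)) *
            (S.nearWords t σ z e).indicator S.mass (b ++ (β ++ u))) := by
        simp only [nearMass, suffixSum, Finset.sum_mul_sum]
        simp only [Finset.mul_sum]
        rw [Finset.sum_comm]
        exact Finset.sum_congr rfl fun a _ => Finset.sum_comm
    _ ≤ ∑ a ∈ words S.A p, ∑ b ∈ words S.A p',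
          S.mass (a ++ (α ++ u)) * S.mass (b ++ (β ++ u)) * R := by
        refine Finset.sum_le_sum fun a _ => Finset.sum_le_sum fun b _ => ?_
        refine (Finset.sum_le_sum fun e _ =>
          mass_mul_indicator_nearWords_le t σ z e _ _).trans ?_
        rw [← Finset.mul_sum]
        exact mul_le_mul_of_nonneg_left (h.sum_indicator_le hz hσ hkn a b u)
          (mul_nonneg (mass_nonneg _) (mass_nonneg _))
    _ = suffixSum n S.mass (α ++ u) * suffixSum n S.mass (β ++ u) * R := by
        rw [suffixSum, suffixSum, Finset.sum_mul_sum]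
        simp only [Finset.sum_mul, p, p']
    _ ≤ 1 * 1 * R := by
        gcongr
        · exact suffixSum_nonneg mass_nonneg n _
        · exact suffixSum_mass_le_one n _
        · exact suffixSum_mass_le_one n _
    _ = R := by rw [one_mul, one_mul]

lemma TemporalDecay.sum_mass_mul_min_nearMass_le {α β : List S.A} {N : ℕ} {c θ : ℝ}
    (h : S.TemporalDecay α β N c θ) (t : ℝ → ℝ) {σ z : ℝ} (hz : z ∈ S.J) {i n : ℕ}
    (hσ : 2 * σ ≤ c * θ ^ (2 * i)) (hin : 2 * i * N ≤ n) (u : List S.A) :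
    ∑ e ∈ words S.A n,
        S.mass e * min (S.nearMass t σ z n e (α ++ u)) (S.nearMass t σ z n e (β ++ u)) ≤
      S.Cstar ^ 2 * (1 / 2) ^ i * (S.mass u)⁻¹ := by
  have hu := mass_pos u
  refine le_of_abs_le (abs_le_of_sq_le_sq (b := S.Cstar ^ 2 * (1 / 2) ^ i * (S.mass u)⁻¹) ?_
    (by positivity))
  calc (∑ e ∈ words S.A n,
        S.mass e * min (S.nearMass t σ z n e (α ++ u)) (S.nearMass t σ z n e (β ++ u))) ^ 2
      ≤ ∑ e ∈ words S.A n, S.mass e *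
          (S.nearMass t σ z n e (α ++ u) * S.nearMass t σ z n e (β ++ u)) :=
        sq_sum_mul_min_le_sum_mul_mul (fun e _ => mass_nonneg e) (sum_mass_words n)
          (fun e _ => nearMass_nonneg t σ z n e _) fun e _ => nearMass_nonneg t σ z n e _
    _ ≤ S.Cstar ^ 4 * (1 / 2) ^ (2 * i) / S.mass u :=
        h.sum_mass_mul_nearMass_mul_nearMass_le t hz hσ hin u
    _ ≤ S.Cstar ^ 4 * (1 / 2) ^ (2 * i) / S.mass u ^ 2 := by
        gcongr
        exact pow_le_of_le_one hu.le (mass_le_one u) two_ne_zero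
    _ = (S.Cstar ^ 2 * (1 / 2) ^ i * (S.mass u)⁻¹) ^ 2 := by
        rw [mul_comm 2 i, pow_mul]
        ring

/-- The sum in the theorem, with the cylinder masses in place of the weights. -/
noncomputable def correlationSum (S : FiniteGibbsIFS) (t : ℝ → ℝ) (σ z : ℝ) (n : ℕ) : ℝ :=
  ∑ e ∈ words S.A n, S.mass e * S.nearMass t σ z n e []

lemma correlationSum_le_one (t : ℝ → ℝ) (σ z : ℝ) (n : ℕ) : S.correlationSum t σ z n ≤ 1 := by
  rw [← sum_mass_words (S := S) n]
  refine Finset.sum_le_sum fun e _ => mul_le_of_le_one_right (mass_nonneg e) ?_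
  exact (suffixSum_mono (Set.indicator_le_self' fun l _ => mass_nonneg l) n []).trans
    (suffixSum_mass_le_one n [])

lemma TemporalDecay.correlationSum_le {α β : List S.A} {N : ℕ} {c θ : ℝ}
    (h : S.TemporalDecay α β N c θ) (hα : α ∈ words S.A N) (hβ : β ∈ words S.A N) {q : ℝ}
    (hq : 0 ≤ q)
    (hqα : ∀ n u, suffixSum n S.mass u - suffixSum n S.mass (α ++ u) ≤ q * suffixSum n S.mass u)
    (hqβ : ∀ n u, suffixSum n S.mass u - suffixSum n S.mass (β ++ u) ≤ q * suffixSum n S.mass u)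
    (t : ℝ → ℝ) {σ z : ℝ} (hz : z ∈ S.J) {i k n : ℕ} (hσ : 2 * σ ≤ c * θ ^ (2 * i))
    (hin : 2 * i * N ≤ n) (hkn : k * N ≤ n) :
    S.correlationSum t σ z n ≤ q ^ k + S.Cstar ^ 2 * (1 / 2) ^ i *
      ∑ j ∈ Finset.range k, ∑ v ∈ words S.A (j * N), (S.mass v)⁻¹ := by
  set P : List S.A → List S.A → ℝ := fun e v =>
    min (S.nearMass t σ z n e (α ++ v)) (S.nearMass t σ z n e (β ++ v))
  have hshed (e : List S.A) : S.nearMass t σ z n e [] ≤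
      q ^ k + ∑ j ∈ Finset.range k, ∑ v ∈ words S.A (j * N), P e v := by
    have hle := suffixSum_le_pow_mul_add_sum_min
      (fun l => Set.indicator_nonneg (s := S.nearWords t σ z e) (fun l _ => mass_nonneg l) l)
      (Set.indicator_le_self' fun l _ => mass_nonneg l) hq hα hβ (hqα n) (hqβ n) k []
      (by simpa using hkn)
    simp only [suffixSum_nil n S.mass, sum_mass_words, mul_one, List.append_nil] at hle
    exact hle
  calc S.correlationSum t σ z n
      ≤ ∑ e ∈ words S.A n,
          S.mass e * (q ^ k + ∑ j ∈ Finset.range k, ∑ v ∈ words S.A (j * N), P e v) :=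
        Finset.sum_le_sum fun e _ => mul_le_mul_of_nonneg_left (hshed e) (mass_nonneg e)
    _ = q ^ k + ∑ j ∈ Finset.range k, ∑ v ∈ words S.A (j * N),
          ∑ e ∈ words S.A n, S.mass e * P e v := by
        simp only [mul_add, Finset.sum_add_distrib, ← Finset.sum_mul, sum_mass_words, one_mul,
          Finset.mul_sum]
        rw [Finset.sum_comm]
        exact congrArg _ (Finset.sum_congr rfl fun j _ => Finset.sum_comm)
    _ ≤ q ^ k + ∑ j ∈ Finset.range k, ∑ v ∈ words S.A (j * N),
          S.Cstar ^ 2 * (1 / 2) ^ i * (S.mass v)⁻¹ := by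
        gcongr with j _ v _
        exact h.sum_mass_mul_min_nearMass_le t hz hσ hin v
    _ = _ := by simp only [Finset.mul_sum]

lemma sum_inv_mass_le {c : ℝ} {n : ℕ} (hc : 0 < c) (hmass : ∀ l ∈ words S.A n, c ≤ S.mass l) :
    ∑ v ∈ words S.A n, (S.mass v)⁻¹ ≤ (c ^ 2)⁻¹ := by
  calc ∑ v ∈ words S.A n, (S.mass v)⁻¹ ≤ ∑ v ∈ words S.A n, (c ^ 2)⁻¹ * S.mass v := by
        refine Finset.sum_le_sum fun v hv => ?_
        have hv0 := mass_pos v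
        rw [inv_mul_eq_div, le_div_iff₀' (by positivity), ← div_eq_mul_inv, div_le_iff₀ hv0, ← sq]
        gcongr
        exact hmass v hv
    _ = (c ^ 2)⁻¹ := by rw [← Finset.mul_sum, sum_mass_words, mul_one]

variable (S) in
lemma exists_sum_range_sum_inv_mass_le (N : ℕ) : ∃ r : ℕ, ∃ K ≥ 0, ∀ k,
    ∑ j ∈ Finset.range k, ∑ v ∈ words S.A (j * N), (S.mass v)⁻¹ ≤ K * (2 ^ r) ^ k := by
  obtain ⟨c, hc, lam, ⟨hlam, -⟩, hmass⟩ := S.exists_pow_le_mass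
  obtain ⟨r, hr⟩ := pow_unbounded_of_one_lt (max 2 ((lam ^ N) ^ 2)⁻¹) one_lt_two
  have hlevel (j : ℕ) : ∑ v ∈ words S.A (j * N), (S.mass v)⁻¹ ≤ (c ^ 2)⁻¹ * (2 ^ r) ^ j := by
    calc ∑ v ∈ words S.A (j * N), (S.mass v)⁻¹ ≤ ((c * lam ^ (j * N)) ^ 2)⁻¹ :=
          sum_inv_mass_le (by positivity) fun l hl => mem_words.1 hl ▸ hmass l
      _ = (c ^ 2)⁻¹ * (((lam ^ N) ^ 2)⁻¹) ^ j := by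
          rw [mul_comm j N, pow_mul, mul_pow, mul_inv, inv_pow, pow_right_comm]
      _ ≤ (c ^ 2)⁻¹ * (2 ^ r) ^ j := by
          gcongr
          exact (le_max_right _ _).trans hr.le
  refine ⟨r, (c ^ 2)⁻¹, by positivity, fun k => ?_⟩
  calc ∑ j ∈ Finset.range k, ∑ v ∈ words S.A (j * N), (S.mass v)⁻¹
      ≤ (c ^ 2)⁻¹ * ∑ j ∈ Finset.range k, (2 ^ r) ^ j := by
        rw [Finset.mul_sum]
        exact Finset.sum_le_sum fun j _ => hlevel j
    _ ≤ (c ^ 2)⁻¹ * (2 ^ r) ^ k := by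
        gcongr
        exact geom_sum_le_pow ((le_max_left _ _).trans hr.le) k

lemma MNL.exists_correlationSum_le {CM : ℝ} (hMNL : S.MNL CM) :
    ∃ N ≥ 1, ∃ c > 0, ∃ θ ∈ Set.Ioo (0 : ℝ) 1, ∃ ρ ∈ Set.Ioo (0 : ℝ) 1, ∃ C ≥ 1,
      ∀ t : ℝ → ℝ, ∀ σ : ℝ, ∀ z ∈ S.J, ∀ n k : ℕ, k * N ≤ n → σ ≤ c * θ ^ k →
        S.correlationSum t σ z n ≤ C * ρ ^ k := by
  obtain ⟨N, hN, α, hα, β, hβ, c, hc, θ, hθ, h⟩ := hMNL.exists_temporalDecay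
  obtain ⟨r, K, hK, hKr⟩ := S.exists_sum_range_sum_inv_mass_le N
  obtain ⟨q, ⟨hq0, hq1⟩, hq⟩ := S.exists_suffixSum_mass_sub_le
    ⟨lt_min (mass_pos α) (mass_pos β), (min_le_left _ _).trans (mass_le_one α)⟩
  refine ⟨2 * (r + 1) * N, Nat.mul_pos (by positivity) hN, c / 2, half_pos hc,
    θ ^ (2 * (r + 1)), ⟨pow_pos hθ.1 _, pow_lt_one₀ hθ.1.le hθ.2 (by positivity)⟩, max q (1 / 2),
    ⟨lt_max_of_lt_right one_half_pos, max_lt hq1 one_half_lt_one⟩, 1 + S.Cstar ^ 2 * K,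
    le_add_of_nonneg_right (by positivity), fun t σ z hz n k hkn hσ => ?_⟩
  have hσ' : 2 * σ ≤ c * θ ^ (2 * ((r + 1) * k)) := by
    rw [← mul_assoc 2, pow_mul]
    linarith
  have hin : 2 * ((r + 1) * k) * N ≤ n := le_of_eq_of_le (by ring) hkn
  have hkn' : k * N ≤ n := le_trans (by gcongr; exact Nat.le_mul_of_pos_left N (by positivity)) hkn
  calc S.correlationSum t σ z n
      ≤ q ^ k + S.Cstar ^ 2 * (1 / 2) ^ ((r + 1) * k) *
          ∑ j ∈ Finset.range k, ∑ v ∈ words S.A (j * N), (S.mass v)⁻¹ :=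
        h.correlationSum_le hα hβ hq0 (hq α (min_le_left _ _)) (hq β (min_le_right _ _))
          t hz hσ' hin hkn'
    _ ≤ q ^ k + S.Cstar ^ 2 * (1 / 2) ^ ((r + 1) * k) * (K * (2 ^ r) ^ k) := by
        gcongr
        exact hKr k
    _ = q ^ k + S.Cstar ^ 2 * K * (1 / 2) ^ k := by
        have hcancel : ((1 / 2) ^ ((r + 1) * k) * (2 ^ r) ^ k : ℝ) = (1 / 2) ^ k := by
          rw [pow_mul, ← mul_pow, pow_succ', mul_assoc, ← mul_pow,
            one_div_mul_cancel two_ne_zero, one_pow, mul_one]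
        linear_combination S.Cstar ^ 2 * K * hcancel
    _ ≤ (1 + S.Cstar ^ 2 * K) * max q (1 / 2) ^ k := by
        rw [add_mul, one_mul]
        gcongr
        · exact le_max_left _ _
        · exact le_max_right _ _

lemma ofReal_w_mul_indicator_le (t : ℝ → ℝ) (σ z : ℝ) {x y : ℝ} (hx : x ∈ S.J) (hy : y ∈ S.J)
    (a e : List S.A) :
    ENNReal.ofReal (S.w a x * S.w e y) *
        Set.indicator (Set.Icc (t (S.refPt e) - σ) (t (S.refPt e) + σ)) (fun _ => (1 : ℝ≥0∞))
          (S.X a (S.refPt e) z) ≤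
      ENNReal.ofReal (S.Cstar ^ 2 * (S.mass e * (S.nearWords t σ z e).indicator S.mass a)) := by
  by_cases ha : a ∈ S.nearWords t σ z e
  · rw [Set.indicator_of_mem (by exact ha), Set.indicator_of_mem ha, mul_one, mul_comm (S.mass e)]
    exact ENNReal.ofReal_le_ofReal (w_mul_w_le a e hx hy)
  · rw [Set.indicator_of_notMem (by exact ha), mul_zero]
    exact zero_le

lemma tsum_ofReal_w_mul_indicator_le (t : ℝ → ℝ) (σ z : ℝ) (n : ℕ) {x y : ℝ} (hx : x ∈ S.J)
    (hy : y ∈ S.J) :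
    ∑' p : (Fin n → S.A) × (Fin n → S.A),
        ENNReal.ofReal (S.w (List.ofFn p.1) x * S.w (List.ofFn p.2) y) *
          Set.indicator
            (Set.Icc (t (S.refPt (List.ofFn p.2)) - σ) (t (S.refPt (List.ofFn p.2)) + σ))
            (fun _ => (1 : ℝ≥0∞))
            (S.X (List.ofFn p.1) (S.refPt (List.ofFn p.2)) z) ≤
      ENNReal.ofReal (S.Cstar ^ 2 * S.correlationSum t σ z n) := by
  have := Fintype.ofFinite S.A
  have hsum : S.Cstar ^ 2 * S.correlationSum t σ z n = ∑ p : (Fin n → S.A) × (Fin n → S.A),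
      S.Cstar ^ 2 * (S.mass (List.ofFn p.2) *
        (S.nearWords t σ z (List.ofFn p.2)).indicator S.mass (List.ofFn p.1)) := by
    simp only [correlationSum, nearMass, suffixSum_nil, sum_words_eq_sum_ofFn, Finset.mul_sum,
      Fintype.sum_prod_type_right]
  rw [tsum_fintype, hsum, ENNReal.ofReal_sum_of_nonneg fun p _ =>
    mul_nonneg (sq_nonneg _) (mul_nonneg (mass_nonneg _)
      (Set.indicator_nonneg (fun l _ => mass_nonneg l) _))]
  exact Finset.sum_le_sum fun p _ => ofReal_w_mul_indicator_le t σ z hx hy _ _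

end FiniteGibbsIFS

theorem nonconcentration_of_MNL_general (S : FiniteGibbsIFS) {CM : ℝ} (hMNL : S.MNL CM) :
    ∃ γ ∈ Set.Ioo (0 : ℝ) 1, ∃ ρ ∈ Set.Ioo (0 : ℝ) 1, ∃ C₀ : ℝ, 1 ≤ C₀ ∧
      ∀ t : ℝ → ℝ, ∀ σ : ℝ, 0 < σ → ∀ x₀ ∈ S.J, ∀ y₀ ∈ S.J, ∀ z₀ ∈ S.J, ∀ n : ℕ,
        ∑' p : (Fin n → S.A) × (Fin n → S.A),
          ENNReal.ofReal (S.w (List.ofFn p.1) x₀ * S.w (List.ofFn p.2) y₀) *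
            Set.indicator
              (Set.Icc (t (S.refPt (List.ofFn p.2)) - σ) (t (S.refPt (List.ofFn p.2)) + σ))
              (fun _ => (1 : ℝ≥0∞))
              (S.X (List.ofFn p.1) (S.refPt (List.ofFn p.2)) z₀)
        ≤ ENNReal.ofReal (C₀ * (σ ^ γ + ρ ^ n)) := by
  obtain ⟨N, hN, c, hc, θ, hθ, q, hq, C, hC, hcorr⟩ := hMNL.exists_correlationSum_le
  obtain ⟨γ, hγ, ρ, hρ, C', hC'⟩ :=
    exists_le_mul_rpow_add_pow hN hc hθ hq (zero_le_one.trans hC)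
  refine ⟨γ, hγ, ρ, hρ, max 1 (S.Cstar ^ 2 * C'), le_max_left _ _, ?_⟩
  intro t σ hσ x₀ hx₀ y₀ hy₀ z₀ hz₀ n
  have hsum := hC' (S.correlationSum t σ z₀ n) σ n hσ
    ((FiniteGibbsIFS.correlationSum_le_one t σ z₀ n).trans hC) (hcorr t σ z₀ hz₀ n)
  have hrhs : 0 ≤ σ ^ γ + ρ ^ n := add_nonneg (Real.rpow_nonneg hσ.le γ) (pow_nonneg hρ.1.le n)
  refine (FiniteGibbsIFS.tsum_ofReal_w_mul_indicator_le t σ z₀ n hx₀ hy₀).trans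
    (ENNReal.ofReal_le_ofReal ?_)
  calc S.Cstar ^ 2 * S.correlationSum t σ z₀ n
      ≤ S.Cstar ^ 2 * (C' * (σ ^ γ + ρ ^ n)) := mul_le_mul_of_nonneg_left hsum (sq_nonneg _)
    _ = S.Cstar ^ 2 * C' * (σ ^ γ + ρ ^ n) := (mul_assoc _ _ _).symm
    _ ≤ max 1 (S.Cstar ^ 2 * C') * (σ ^ γ + ρ ^ n) :=
        mul_le_mul_of_nonneg_right (le_max_right _ _) hrhs

/-- **The key non-concentration estimate under (MNL)** (Proposition 6.1).

In the finite fully-branched `C^{1+α}` IFS setting with its dimension-`δ` Gibbs measure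
`μ`, assume (MNL).  For every bound `A` on the `C^δ` norm of the target function `t` on
`F`, there are `γ, ρ ∈ (0,1)` and `C₀ ≥ 1` (depending only on `A` and the IFS) such
that for all sufficiently small `σ > 0`, all `x₀, y₀, z₀ ∈ F` and all `n ≥ 1`,
`Σ_{a∈𝒜ⁿ} Σ_{c∈𝒜ⁿ} w_a(x₀) w_c(y₀) 1_{[t(x_c)-σ, t(x_c)+σ]}(X_a(x_c, z₀))
  ≤ C₀ (σ^γ + ρⁿ)`. -/
theorem nonconcentration_of_MNL (S : FiniteGibbsIFS) (CM : ℝ) (hCM : 0 < CM)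
    (hMNL : S.MNL CM) :
    ∀ A : ℝ, ∃ γ ∈ Set.Ioo (0:ℝ) 1, ∃ ρ ∈ Set.Ioo (0:ℝ) 1, ∃ C₀ : ℝ, 1 ≤ C₀ ∧
      ∃ σ₀ : ℝ, 0 < σ₀ ∧
      ∀ t : ℝ → ℝ,
        (∀ x ∈ S.attract, |t x| ≤ A) →
        (∀ x ∈ S.attract, ∀ y ∈ S.attract, |t x - t y| ≤ A * |x - y| ^ S.δ) →
        ∀ σ : ℝ, 0 < σ → σ ≤ σ₀ →
        ∀ x₀ ∈ S.attract, ∀ y₀ ∈ S.attract, ∀ z₀ ∈ S.attract, ∀ n : ℕ, 1 ≤ n →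
          ∑' p : (Fin n → S.A) × (Fin n → S.A),
            ENNReal.ofReal (S.w (List.ofFn p.1) x₀ * S.w (List.ofFn p.2) y₀) *
              Set.indicator
                (Set.Icc (t (S.refPt (List.ofFn p.2)) - σ) (t (S.refPt (List.ofFn p.2)) + σ))
                (fun _ => (1 : ℝ≥0∞))
                (S.X (List.ofFn p.1) (S.refPt (List.ofFn p.2)) z₀)
          ≤ ENNReal.ofReal (C₀ * (σ ^ γ + ρ ^ n)) := by
  intro A
  obtain ⟨γ, hγ, ρ, hρ, C₀, hC₀, hsum⟩ := nonconcentration_of_MNL_general S hMNL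
  refine ⟨γ, hγ, ρ, hρ, C₀, hC₀, 1, one_pos, fun t _ _ σ hσ _ x₀ hx₀ y₀ hy₀ z₀ hz₀ n _ => ?_⟩
  exact hsum t σ hσ x₀ (S.attract_subset_J hx₀) y₀ (S.attract_subset_J hy₀) z₀
    (S.attract_subset_J hz₀) n
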